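/- Let f : ℝ^d → ℝ be four times continuously differentiable in a neighborhood of x with ∇f(x) ≠ 0. Then (1/ε²)( min_{y ∈ B̄_ε(x)} f(y) + max_{y ∈ B̄_ε(x)} f(y) − 2 f(x) ) = Δ_∞ f(x)/|∇f(x)|² + O(ε²) as ε → 0⁺, where Δ_∞ f(x) = (∇f)ᵀ (Hess f) (∇f)(x). -/

import Mathlib

open Metric Asymptotics
open scoped InnerProductSpace

open Filter
open scoped Topology

/-!
Let `v` be the direction of the gradient at `x`. If `‖h‖ ≤ ε` and `f (x + h)` is at least
`f (x + ε • v)`, then `h = ε • v + O(ε²)` and `⟪v, h⟫ = ε + O(ε³)`: the curvature of the sphere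
makes the axial loss quadratic in the tangential displacement, and the first-order gain of `f`
allows only a loss of order `ε ‖h - ε • v‖`.

Let `R` be the reflection in the hyperplane orthogonal to `v`. In `f (x + h) + f (x + R h)` the odd
axial terms cancel, and the tangential terms contribute only `O(ε⁴)`, so this sum is
`2 f x + ε² D²f(v, v) + O(ε⁴)`. As the infimum over the ball is at most `f (x + R h)`, taking the
supremum over `h` bounds the sum of the infimum and the supremum from above. Replacing `f` by `-f`
and `v` by `-v` exchanges the two and gives the matching lower bound.
-/

section Taylor

variable {E F : Type*} [NormedAddCommGroup E] [NormedSpace ℝ E]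
  [NormedAddCommGroup F] [NormedSpace ℝ F] {f : E → F} {x : E}

theorem isBigO_sub_pow_succ_of_hasFDerivAt {f' : E → E →L[ℝ] F} {n : ℕ}
    (hf : ∀ᶠ y in 𝓝 x, HasFDerivAt f (f' y) y) (hf' : f' =O[𝓝 x] fun y => ‖y - x‖ ^ n) :
    (fun y => f y - f x) =O[𝓝 x] fun y => ‖y - x‖ ^ (n + 1) := by
  obtain ⟨C, hC, hbound⟩ := hf'.exists_nonneg
  obtain ⟨r, hr, hball⟩ := Metric.eventually_nhds_iff_ball.1 (hf.and hbound.bound)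
  refine .of_bound C ?_
  filter_upwards [ball_mem_nhds x hr] with y hy
  have hseg : segment ℝ x y ⊆ ball x r :=
    (convex_ball x r).segment_subset (mem_ball_self hr) hy
  have hderiv : ∀ w ∈ segment ℝ x y, ‖f' w‖ ≤ C * ‖y - x‖ ^ n := fun w hw => by
    calc ‖f' w‖ ≤ C * ‖w - x‖ ^ n := by simpa using (hball w (hseg hw)).2
      _ ≤ C * ‖y - x‖ ^ n := by gcongr; exact norm_sub_le_of_mem_segment hw
  calc ‖f y - f x‖ ≤ C * ‖y - x‖ ^ n * ‖y - x‖ :=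
        (convex_segment x y).norm_image_sub_le_of_norm_hasFDerivWithin_le
          (fun w hw => (hball w (hseg hw)).1.hasFDerivWithinAt) hderiv
          (left_mem_segment ℝ x y) (right_mem_segment ℝ x y)
    _ = C * ‖‖y - x‖ ^ (n + 1)‖ := by rw [norm_pow, norm_norm, pow_succ, mul_assoc]

theorem eventually_hasFDerivAt (hf : ContDiffAt ℝ 1 f x) :
    ∀ᶠ y in 𝓝 x, HasFDerivAt f (fderiv ℝ f y) y :=
  (hf.eventually (by simp)).mono fun _ hy => (hy.differentiableAt one_ne_zero).hasFDerivAt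

theorem isBigO_fderiv_sub_fderiv (hf : ContDiffAt ℝ 2 f x) :
    (fun p : E × E => fderiv ℝ f p.1 - fderiv ℝ f p.2) =O[𝓝 (x, x)] fun p => p.1 - p.2 :=
  ((hf.fderiv_right (m := 1) le_rfl).hasStrictFDerivAt one_ne_zero).isBigO_sub

theorem isBigO_sub_sub_fderiv (hf : ContDiffAt ℝ 2 f x) :
    (fun p : E × E => f p.1 - f p.2 - fderiv ℝ f p.2 (p.1 - p.2)) =O[𝓝 (x, x)]
      fun p => ‖p.1 - p.2‖ ^ 2 := by
  obtain ⟨C, hC, hbound⟩ := (isBigO_fderiv_sub_fderiv hf).exists_nonneg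
  have hdiff := eventually_hasFDerivAt (hf.of_le one_le_two)
  obtain ⟨r, hr, hball⟩ := Metric.eventually_nhds_iff_ball.1
    (hbound.bound.and (continuousAt_fst.eventually hdiff))
  refine .of_bound C ?_
  filter_upwards [prod_mem_nhds (ball_mem_nhds x hr) (ball_mem_nhds x hr)] with ⟨y, z⟩ ⟨hy, hz⟩
  have hmem : ∀ {w}, w ∈ segment ℝ z y → (w, z) ∈ ball (x, x) r := fun hw => by
    rw [← ball_prod_same]
    exact ⟨(convex_ball x r).segment_subset hz hy hw, hz⟩
  have hderiv : ∀ w ∈ segment ℝ z y, ‖fderiv ℝ f w - fderiv ℝ f z‖ ≤ C * ‖y - z‖ := fun w hw =>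
    (hball (w, z) (hmem hw)).1.trans (by gcongr; exact norm_sub_le_of_mem_segment hw)
  calc ‖f y - f z - fderiv ℝ f z (y - z)‖ ≤ C * ‖y - z‖ * ‖y - z‖ :=
        (convex_segment z y).norm_image_sub_le_of_norm_hasFDerivWithin_le'
          (fun w hw => (hball (w, z) (hmem hw)).2.hasFDerivWithinAt) hderiv
          (left_mem_segment ℝ z y) (right_mem_segment ℝ z y)
    _ = C * ‖‖y - z‖ ^ 2‖ := by rw [norm_pow, norm_norm, pow_two, mul_assoc]

theorem isBigO_sub_sub_fderiv_center (hf : ContDiffAt ℝ 2 f x) :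
    (fun p : E × E => f p.1 - f p.2 - fderiv ℝ f x (p.1 - p.2)) =O[𝓝 (x, x)]
      fun p => (‖p.1 - x‖ + ‖p.2 - x‖) * ‖p.1 - p.2‖ := by
  have hslope : (fun p : E × E => fderiv ℝ f p.2 - fderiv ℝ f x) =O[𝓝 (x, x)]
      fun p => ‖p.1 - x‖ + ‖p.2 - x‖ :=
    ((isBigO_fderiv_sub_fderiv hf).comp_tendsto
      ((by fun_prop : Continuous fun p : E × E => (p.2, x)).tendsto' (x, x) (x, x) rfl)).trans <|
      .of_norm_le fun p => le_add_of_nonneg_left (norm_nonneg _)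
  have hlinear : (fun p : E × E => (fderiv ℝ f p.2 - fderiv ℝ f x) (p.1 - p.2)) =O[𝓝 (x, x)]
      fun p => (‖p.1 - x‖ + ‖p.2 - x‖) * ‖p.1 - p.2‖ :=
    (IsBigO.of_norm_le fun p => ContinuousLinearMap.le_opNorm _ _).trans
      (hslope.norm_left.mul (isBigO_refl _ _))
  have hquadratic : (fun p : E × E => ‖p.1 - p.2‖ ^ 2) =O[𝓝 (x, x)]
      fun p => (‖p.1 - x‖ + ‖p.2 - x‖) * ‖p.1 - p.2‖ := by
    refine .of_norm_le fun p => ?_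
    rw [norm_pow, norm_norm, pow_two]
    gcongr
    rw [norm_sub_rev p.2]
    exact norm_sub_le_norm_sub_add_norm_sub _ _ _
  refine (((isBigO_sub_sub_fderiv hf).trans hquadratic).add hlinear).congr_left fun p => ?_
  rw [sub_apply]
  abel

theorem isBigO_add_sub_two_smul (hf : ContDiffAt ℝ 2 f x) :
    (fun h => f (x + h) + f (x - h) - (2 : ℝ) • f x) =O[𝓝 0] fun h => ‖h‖ ^ 2 := by
  have hpos := (isBigO_sub_sub_fderiv hf).comp_tendsto
    ((by fun_prop : Continuous fun h : E => (x + h, x)).tendsto' 0 (x, x) (by simp))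
  have hneg := (isBigO_sub_sub_fderiv hf).comp_tendsto
    ((by fun_prop : Continuous fun h : E => (x - h, x)).tendsto' 0 (x, x) (by simp))
  simp only [Function.comp_def, add_sub_cancel_left, sub_sub_cancel_left, map_neg, norm_neg]
    at hpos hneg
  refine (hpos.add hneg).congr_left fun h => ?_
  module

theorem eventually_hasFDerivAt_add_and_sub (hf : ContDiffAt ℝ 1 f x) :
    ∀ᶠ h in 𝓝 0, HasFDerivAt (fun k => f (x + k)) (fderiv ℝ f (x + h)) h ∧
      HasFDerivAt (fun k => f (x - k)) (-fderiv ℝ f (x - h)) h := by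
  have hdiff := eventually_hasFDerivAt hf
  filter_upwards [((continuous_const_add x).tendsto' 0 x (add_zero x)).eventually hdiff,
    ((continuous_const.sub continuous_id).tendsto' 0 x (sub_zero x)).eventually hdiff]
    with h hpos hneg
  refine ⟨(hasFDerivAt_comp_add_left x).2 hpos, ?_⟩
  exact (hneg.comp h ((hasFDerivAt_id h).const_sub x)).congr_fderiv (by ext; simp)

theorem isBigO_add_sub_two_smul_sub_fderiv_fderiv (hf : ContDiffAt ℝ 4 f x) :
    (fun h => f (x + h) + f (x - h) - (2 : ℝ) • f x - fderiv ℝ (fderiv ℝ f) x h h) =O[𝓝 0]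
      fun h => ‖h‖ ^ 4 := by
  set D := fderiv ℝ f
  set B := fderiv ℝ D x
  have hD : ContDiffAt ℝ 3 D x := hf.fderiv_right (by norm_num)
  have hsymm (h k : E) : B h k = B k h :=
    hf.isSymmSndFDerivAt (by rw [minSmoothness_of_isRCLikeNormedField]; norm_num) h k
  have hderiv : ∀ᶠ h in 𝓝 0, HasFDerivAt
      (fun h => f (x + h) + f (x - h) - (2 : ℝ) • f x - B h h)
      (D (x + h) - D (x - h) - (2 : ℝ) • B h) h := by
    filter_upwards [eventually_hasFDerivAt_add_and_sub (hf.of_le (by norm_num))]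
      with h ⟨hpos, hneg⟩
    refine (((hpos.add hneg).sub_const ((2 : ℝ) • f x)).sub
      (B.hasFDerivAt.clm_apply (hasFDerivAt_id h))).congr_fderiv ?_
    ext k
    simp [hsymm k h, two_smul, D, sub_eq_add_neg]
  have hderiv₂ : ∀ᶠ h in 𝓝 0, HasFDerivAt (fun h => D (x + h) - D (x - h) - (2 : ℝ) • B h)
      (fderiv ℝ D (x + h) + fderiv ℝ D (x - h) - (2 : ℝ) • B) h := by
    filter_upwards [eventually_hasFDerivAt_add_and_sub (hD.of_le (by norm_num))]
      with h ⟨hpos, hneg⟩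
    exact ((hpos.sub hneg).sub (B.hasFDerivAt.const_smul (2 : ℝ))).congr_fderiv (by simp)
  have hsecond : (fun h => fderiv ℝ D (x + h) + fderiv ℝ D (x - h) - (2 : ℝ) • B) =O[𝓝 0]
      fun h => ‖h - 0‖ ^ 2 := by
    simpa using isBigO_add_sub_two_smul (hD.fderiv_right (by norm_num))
  have hfirst : (fun h => D (x + h) - D (x - h) - (2 : ℝ) • B h) =O[𝓝 0] fun h => ‖h - 0‖ ^ 3 := by
    simpa using isBigO_sub_pow_succ_of_hasFDerivAt hderiv₂ hsecond
  simpa [two_smul] using isBigO_sub_pow_succ_of_hasFDerivAt hderiv hfirst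

theorem isBigO_symmetric_translate (hf : ContDiffAt ℝ 3 f x) :
    (fun p : E × E => f (x + p.1 + p.2) + f (x - p.1 + p.2) - f (x + p.1) - f (x - p.1)
        - (2 : ℝ) • fderiv ℝ f x p.2)
      =O[𝓝 0] fun p => (‖p.1‖ ^ 2 + ‖p.2‖) * ‖p.2‖ := by
  have htaylor := isBigO_sub_sub_fderiv (hf.of_le (by norm_num))
  have hpos := htaylor.comp_tendsto ((by fun_prop : Continuous fun p : E × E =>
    (x + p.1 + p.2, x + p.1)).tendsto' 0 (x, x) (by simp))
  have hneg := htaylor.comp_tendsto ((by fun_prop : Continuous fun p : E × E =>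
    (x - p.1 + p.2, x - p.1)).tendsto' 0 (x, x) (by simp))
  simp only [Function.comp_def, add_sub_cancel_left] at hpos hneg
  have hslope := (isBigO_add_sub_two_smul (hf.fderiv_right (m := 2) (by norm_num))).comp_tendsto
    (continuous_fst.tendsto' (0 : E × E) 0 rfl)
  have hlinear : (fun p : E × E => (fderiv ℝ f (x + p.1) + fderiv ℝ f (x - p.1)
      - (2 : ℝ) • fderiv ℝ f x) p.2) =O[𝓝 0] fun p => ‖p.1‖ ^ 2 * ‖p.2‖ :=
    (IsBigO.of_norm_le fun p => ContinuousLinearMap.le_opNorm _ _).trans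
      (hslope.norm_left.mul (isBigO_refl _ _))
  have hlinear_le : (fun p : E × E => ‖p.1‖ ^ 2 * ‖p.2‖) =O[𝓝 0]
      fun p => (‖p.1‖ ^ 2 + ‖p.2‖) * ‖p.2‖ :=
    .of_norm_le fun p => by simp [add_mul, mul_nonneg]
  have hquadratic_le : (fun p : E × E => ‖p.2‖ ^ 2) =O[𝓝 0]
      fun p => (‖p.1‖ ^ 2 + ‖p.2‖) * ‖p.2‖ :=
    .of_norm_le fun p => by simp [add_mul, pow_two, mul_nonneg]
  refine (((hpos.add hneg).trans hquadratic_le).add (hlinear.trans hlinear_le)).congr_left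
    fun p => ?_
  simp only [sub_apply, add_apply, smul_apply]
  abel

end Taylor

section Hyperplane

variable {E : Type*} [NormedAddCommGroup E] [InnerProductSpace ℝ E] {v : E}

theorem reflection_orthogonal_singleton_apply_of_norm_one (hv : ‖v‖ = 1) (h : E) :
    (ℝ ∙ v)ᗮ.reflection h = h - (2 : ℝ) • ⟪v, h⟫_ℝ • v := by
  rw [Submodule.reflection_orthogonal_apply, Submodule.reflection_apply,
    Submodule.starProjection_unit_singleton ℝ hv, two_smul, two_smul]
  abel

theorem norm_sub_smul_sq_le {ε : ℝ} {h : E} (hv : ‖v‖ = 1) (hε : 0 ≤ ε) (hh : ‖h‖ ≤ ε) :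
    ‖h - ε • v‖ ^ 2 ≤ 2 * ε * (ε - ⟪v, h⟫_ℝ) := by
  have hsq : ‖h‖ ^ 2 ≤ ε ^ 2 := by gcongr
  rw [norm_sub_sq_real, inner_smul_right, real_inner_comm, norm_smul, hv, Real.norm_of_nonneg hε]
  linarith

end Hyperplane

theorem isBigO_of_mul_self {α 𝕜 : Type*} [NormedDivisionRing 𝕜] {l : Filter α} {u v : α → 𝕜}
    (h : (fun a => u a * u a) =O[l] fun a => v a * u a) : u =O[l] v := by
  obtain ⟨C, hC, hbound⟩ := h.exists_nonneg
  refine .of_bound C (hbound.bound.mono fun a ha => ?_)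
  rw [norm_mul, norm_mul, ← mul_assoc] at ha
  rcases (norm_nonneg (u a)).eq_or_lt with hu | hu
  · rw [← hu]; positivity
  · exact le_of_mul_le_mul_right ha hu

/-- The filter along which `ε → 0⁺` while `h` stays in the ball of radius `ε` and `x + h` does at
least as well as the step `x + ε • v` in maximizing `f`. An estimate along it is one that is
uniform in `h`. It replaces the expansion of a maximizer of `f` on the ball, so that the supremum
need not be attained. -/
def ascentFilter {E : Type*} [NormedAddCommGroup E] [NormedSpace ℝ E] (f : E → ℝ) (x v : E) :
    Filter (ℝ × E) :=
  comap Prod.fst (𝓝[>] 0) ⊓ 𝓟 {p | ‖p.2‖ ≤ p.1 ∧ f (x + p.1 • v) ≤ f (x + p.2)}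

namespace ascentFilter

section NormedSpace

variable {E : Type*} [NormedAddCommGroup E] [NormedSpace ℝ E] {f : E → ℝ} {x v : E}

theorem eventually_iff {P : ℝ × E → Prop} :
    (∀ᶠ p in ascentFilter f x v, P p) ↔
      ∀ᶠ ε in 𝓝[>] 0, ∀ h, ‖h‖ ≤ ε → f (x + ε • v) ≤ f (x + h) → P (ε, h) := by
  rw [ascentFilter, eventually_inf_principal, eventually_comap]
  refine eventually_congr (.of_forall fun ε => ⟨fun H h hh hfh => H (ε, h) rfl ⟨hh, hfh⟩, ?_⟩)
  rintro H ⟨_, h⟩ rfl ⟨hh, hfh⟩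
  exact H h hh hfh

theorem eventually_mem (f : E → ℝ) (x v : E) :
    ∀ᶠ p in ascentFilter f x v, 0 < p.1 ∧ ‖p.2‖ ≤ p.1 ∧ f (x + p.1 • v) ≤ f (x + p.2) :=
  eventually_iff.2 <| eventually_mem_nhdsWithin.mono fun _ hε _ hh hf => ⟨hε, hh, hf⟩

theorem tendsto_fst : Tendsto Prod.fst (ascentFilter f x v) (𝓝 0) :=
  (tendsto_comap.mono_left inf_le_left).mono_right nhdsWithin_le_nhds

theorem isBigO_snd : (fun p => p.2) =O[ascentFilter f x v] fun p => p.1 :=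
  .of_norm_eventuallyLE <| (eventually_mem f x v).mono fun _ hp => hp.2.1

end NormedSpace

section InnerProductSpace

variable {E : Type*} [NormedAddCommGroup E] [InnerProductSpace ℝ E] {f : E → ℝ} {x v : E} {g : ℝ}

theorem isBigO_inner (hv : ‖v‖ = 1) :
    (fun p => ⟪v, p.2⟫_ℝ) =O[ascentFilter f x v] fun p => p.1 :=
  (IsBigO.of_norm_le fun p => by
    simpa [hv] using abs_real_inner_le_norm v p.2).trans isBigO_snd.norm_left

theorem isBigO_sub_inner (hf : ContDiffAt ℝ 2 f x) (hg : 0 < g) (hv : ‖v‖ = 1)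
    (hfg : ∀ w, fderiv ℝ f x w = g * ⟪v, w⟫_ℝ) :
    (fun p => p.1 - ⟪v, p.2⟫_ℝ) =O[ascentFilter f x v] fun p => p.1 * ‖p.2 - p.1 • v‖ := by
  have hsmul : (fun p : ℝ × E => p.1 • v) =O[ascentFilter f x v] fun p => p.1 :=
    .of_norm_right <| .of_norm_le fun p => by simp [norm_smul, hv]
  have hendpoints : Tendsto (fun p => (x + p.2, x + p.1 • v)) (ascentFilter f x v) (𝓝 (x, x)) := by
    simpa using ((isBigO_snd.trans_tendsto tendsto_fst).const_add x).prodMk_nhds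
      ((hsmul.trans_tendsto tendsto_fst).const_add x)
  have htaylor := (isBigO_sub_sub_fderiv_center hf).comp_tendsto hendpoints
  simp only [Function.comp_def, add_sub_add_left_eq_sub, add_sub_cancel_left] at htaylor
  refine IsBigO.trans (.of_bound g⁻¹ ?_) (htaylor.trans
    ((isBigO_snd.norm_left.add hsmul.norm_left).mul (isBigO_refl _ _)))
  filter_upwards [eventually_mem f x v] with ⟨ε, h⟩ ⟨_, hh, hascent⟩
  have hnonneg : 0 ≤ ε - ⟪v, h⟫_ℝ := by
    have := real_inner_le_norm v h
    rw [hv, one_mul] at this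
    linarith
  have hinner : ⟪v, h - ε • v⟫_ℝ = -(ε - ⟪v, h⟫_ℝ) := by
    simp [inner_sub_right, inner_smul_right, hv]
  rw [Real.norm_of_nonneg hnonneg, ← div_eq_inv_mul, le_div_iff₀ hg, hfg, hinner]
  refine le_trans ?_ (le_abs_self _)
  linarith

theorem isBigO_sub_smul (hf : ContDiffAt ℝ 2 f x) (hg : 0 < g) (hv : ‖v‖ = 1)
    (hfg : ∀ w, fderiv ℝ f x w = g * ⟪v, w⟫_ℝ) :
    (fun p => p.2 - p.1 • v) =O[ascentFilter f x v] fun p => p.1 ^ 2 := by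
  refine .of_norm_left (isBigO_of_mul_self ?_)
  calc (fun p => ‖p.2 - p.1 • v‖ * ‖p.2 - p.1 • v‖)
      =O[ascentFilter f x v] fun p => p.1 * (p.1 - ⟪v, p.2⟫_ℝ) := by
        refine .of_bound 2 ((eventually_mem f x v).mono fun p ⟨hε, hh, _⟩ => ?_)
        rw [← pow_two, norm_pow, norm_norm]
        refine (norm_sub_smul_sq_le hv hε.le hh).trans ?_
        rw [mul_assoc]
        gcongr
        exact le_abs_self _
    _ =O[ascentFilter f x v] fun p => p.1 * (p.1 * ‖p.2 - p.1 • v‖) :=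
        (isBigO_refl _ _).mul (isBigO_sub_inner hf hg hv hfg)
    _ = fun p => p.1 ^ 2 * ‖p.2 - p.1 • v‖ := by ext; ring

theorem isBigO_sub_inner_pow_three (hf : ContDiffAt ℝ 2 f x) (hg : 0 < g) (hv : ‖v‖ = 1)
    (hfg : ∀ w, fderiv ℝ f x w = g * ⟪v, w⟫_ℝ) :
    (fun p => p.1 - ⟪v, p.2⟫_ℝ) =O[ascentFilter f x v] fun p => p.1 ^ 3 :=
  ((isBigO_sub_inner hf hg hv hfg).trans
    ((isBigO_refl _ _).mul (isBigO_sub_smul hf hg hv hfg).norm_left)).congr_right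
    fun p => (pow_succ' p.1 2).symm

theorem isBigO_sub_inner_smul (hf : ContDiffAt ℝ 2 f x) (hg : 0 < g) (hv : ‖v‖ = 1)
    (hfg : ∀ w, fderiv ℝ f x w = g * ⟪v, w⟫_ℝ) :
    (fun p => p.2 - ⟪v, p.2⟫_ℝ • v) =O[ascentFilter f x v] fun p => p.1 ^ 2 := by
  have hz := isBigO_sub_smul hf hg hv hfg
  have hproj : (fun p : ℝ × E => ⟪v, p.2 - p.1 • v⟫_ℝ • v) =O[ascentFilter f x v]
      fun p => p.1 ^ 2 :=
    (IsBigO.of_norm_le fun p => by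
      simpa [norm_smul, hv] using abs_real_inner_le_norm v (p.2 - p.1 • v)).trans hz.norm_left
  refine (hz.sub hproj).congr_left fun p => ?_
  simp [inner_sub_right, inner_smul_right, hv, sub_smul]

theorem isBigO_add_reflection_sub (hf : ContDiffAt ℝ 4 f x) (hg : 0 < g) (hv : ‖v‖ = 1)
    (hfg : ∀ w, fderiv ℝ f x w = g * ⟪v, w⟫_ℝ) :
    (fun p => f (x + p.2) + f (x + (ℝ ∙ v)ᗮ.reflection p.2) - 2 * f x
        - p.1 ^ 2 * fderiv ℝ (fderiv ℝ f) x v v)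
      =O[ascentFilter f x v] fun p => p.1 ^ 4 := by
  have hf₂ : ContDiffAt ℝ 2 f x := hf.of_le (by norm_num)
  have haxial : (fun p => ⟪v, p.2⟫_ℝ • v) =O[ascentFilter f x v] fun p => p.1 :=
    .of_norm_left <| by simpa [norm_smul, hv] using isBigO_inner hv
  have htangential := isBigO_sub_inner_smul hf₂ hg hv hfg
  have haxial_zero := haxial.trans_tendsto tendsto_fst
  have htangential_zero := htangential.trans_tendsto (by simpa using tendsto_fst.pow 2)
  have htranslate := ((isBigO_symmetric_translate (hf.of_le (by norm_num))).comp_tendsto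
    (haxial_zero.prodMk_nhds htangential_zero)).trans
    (((haxial.norm_left.pow 2).add htangential.norm_left).mul htangential.norm_left)
  have hline := ((isBigO_add_sub_two_smul_sub_fderiv_fderiv hf).comp_tendsto haxial_zero).trans
    (haxial.norm_left.pow 4)
  have hsquare := (((isBigO_sub_inner_pow_three hf₂ hg hv hfg).mul
    ((isBigO_inner (f := f) (x := x) hv).add (isBigO_refl _ _))).const_mul_left
    (-fderiv ℝ (fderiv ℝ f) x v v))
  refine (((htranslate.congr_right fun p => (pow_add p.1 2 2).symm).add hline).add
    (hsquare.congr_right fun p => (pow_succ p.1 3).symm)).congr_left fun p => ?_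
  have hpos : x + ⟪v, p.2⟫_ℝ • v + (p.2 - ⟪v, p.2⟫_ℝ • v) = x + p.2 := by abel
  have hneg : x - ⟪v, p.2⟫_ℝ • v + (p.2 - ⟪v, p.2⟫_ℝ • v) = x + (ℝ ∙ v)ᗮ.reflection p.2 := by
    rw [reflection_orthogonal_singleton_apply_of_norm_one hv]
    module
  have hzero : fderiv ℝ f x (p.2 - ⟪v, p.2⟫_ℝ • v) = 0 := by
    simp [hfg, inner_sub_right, inner_smul_right, hv]
  simp only [Function.comp_apply, hpos, hneg, hzero, map_smul, smul_apply, smul_eq_mul]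
  ring

end InnerProductSpace

end ascentFilter

section Ball

theorem eventually_bddBelow_image_closedBall {X : Type*} [PseudoMetricSpace X] {f : X → ℝ} {x : X}
    (hf : ContinuousAt f x) : ∀ᶠ ε in 𝓝 0, BddBelow (f '' closedBall x ε) := by
  obtain ⟨m, hm⟩ := hf.isBoundedUnder_ge
  filter_upwards [eventually_closedBall_subset hm] with ε hε
  exact ⟨m, Set.forall_mem_image.2 fun y hy => hε hy⟩

variable {E : Type*} [NormedAddCommGroup E] [InnerProductSpace ℝ E] {f : E → ℝ} {x v : E} {g : ℝ}

theorem exists_sInf_add_sSup_image_closedBall_le (hf : ContDiffAt ℝ 4 f x) (hg : 0 < g)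
    (hv : ‖v‖ = 1) (hfg : ∀ w, fderiv ℝ f x w = g * ⟪v, w⟫_ℝ) :
    ∃ C, ∀ᶠ ε in 𝓝[>] 0, sInf (f '' closedBall x ε) + sSup (f '' closedBall x ε) - 2 * f x
      - ε ^ 2 * fderiv ℝ (fderiv ℝ f) x v v ≤ C * ε ^ 4 := by
  obtain ⟨C, hC⟩ := (ascentFilter.isBigO_add_reflection_sub hf hg hv hfg).bound
  refine ⟨C, ?_⟩
  filter_upwards [ascentFilter.eventually_iff.1 hC, self_mem_nhdsWithin,
    nhdsWithin_le_nhds (eventually_bddBelow_image_closedBall hf.continuousAt)]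
    with ε hbound hε hbdd
  have hball (h : E) (hh : ‖h‖ ≤ ε) : x + h ∈ closedBall x ε := by simpa using hh
  have hascent (h : E) (hh : ‖h‖ ≤ ε) (hfh : f (x + ε • v) ≤ f (x + h)) :
      f (x + h) ≤ 2 * f x + ε ^ 2 * fderiv ℝ (fderiv ℝ f) x v v + C * ε ^ 4
        - sInf (f '' closedBall x ε) := by
    have hreflected : sInf (f '' closedBall x ε) ≤ f (x + (ℝ ∙ v)ᗮ.reflection h) :=
      csInf_le hbdd ⟨_, hball _ (by simpa using hh), rfl⟩
    have hsum := (le_abs_self _).trans (hbound h hh hfh)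
    rw [Real.norm_of_nonneg (pow_nonneg hε.le 4)] at hsum
    linarith
  have hεv : ‖ε • v‖ ≤ ε := by rw [norm_smul, hv, mul_one, Real.norm_of_nonneg hε.le]
  have hsup : sSup (f '' closedBall x ε) ≤ 2 * f x + ε ^ 2 * fderiv ℝ (fderiv ℝ f) x v v
      + C * ε ^ 4 - sInf (f '' closedBall x ε) := by
    refine csSup_le ((nonempty_closedBall.2 hε.le).image f) (Set.forall_mem_image.2 fun y hy => ?_)
    rcases le_total (f (x + ε • v)) (f y) with hfy | hfy
    · simpa using hascent (y - x) (by simpa [dist_eq_norm] using hy) (by simpa using hfy)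
    · exact hfy.trans (hascent _ hεv le_rfl)
  linarith

theorem isBigO_sInf_add_sSup_image_closedBall (hf : ContDiffAt ℝ 4 f x) (hg : 0 < g)
    (hv : ‖v‖ = 1) (hfg : ∀ w, fderiv ℝ f x w = g * ⟪v, w⟫_ℝ) :
    (fun ε => sInf (f '' closedBall x ε) + sSup (f '' closedBall x ε) - 2 * f x
      - ε ^ 2 * fderiv ℝ (fderiv ℝ f) x v v) =O[𝓝[>] 0] fun ε => ε ^ 4 := by
  have hD : fderiv ℝ (-f) = -fderiv ℝ f := funext fun _ => fderiv_neg
  have hD₂ : fderiv ℝ (-fderiv ℝ f) x = -fderiv ℝ (fderiv ℝ f) x := fderiv_neg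
  obtain ⟨C, hC⟩ := exists_sInf_add_sSup_image_closedBall_le hf hg hv hfg
  obtain ⟨C', hC'⟩ := exists_sInf_add_sSup_image_closedBall_le (f := -f) (v := -v) hf.neg hg
    (by rwa [norm_neg]) (fun w => by simp [hD, hfg])
  refine .of_bound (max C C') ?_
  filter_upwards [hC, hC'] with ε hle hge
  have himage : (-f) '' closedBall x ε = -(f '' closedBall x ε) := by
    rw [← Set.image_neg_eq_neg, Set.image_image]
    rfl
  rw [himage, Real.sInf_neg, Real.sSup_neg, hD, hD₂] at hge
  simp only [Pi.neg_apply, neg_apply, map_neg] at hge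
  have hCmax : C * ε ^ 4 ≤ max C C' * ε ^ 4 := by gcongr; exact le_max_left _ _
  have hCmax' : C' * ε ^ 4 ≤ max C C' * ε ^ 4 := by gcongr; exact le_max_right _ _
  rw [Real.norm_of_nonneg (by positivity : 0 ≤ ε ^ 4), Real.norm_eq_abs, abs_le]
  constructor <;> linarith

end Ball

section Gradient

variable {E : Type*} [NormedAddCommGroup E] [InnerProductSpace ℝ E] [CompleteSpace E]

theorem inner_fderiv_gradient (f : E → ℝ) (x v w : E) :
    ⟪v, fderiv ℝ (gradient f) x w⟫_ℝ = fderiv ℝ (fderiv ℝ f) x w v := by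
  let e : (E →L[ℝ] ℝ) ≃ₗᵢ[ℝ] E := (InnerProductSpace.toDual ℝ E).symm
  rw [show gradient f = e ∘ fderiv ℝ f from rfl, e.comp_fderiv, real_inner_comm]
  exact InnerProductSpace.toDual_symm_apply

theorem infinity_laplacian_ball_approximation_general {f : E → ℝ} {x : E}
    (hf : ContDiffAt ℝ 4 f x) (hgrad : gradient f x ≠ 0) :
    (fun ε : ℝ =>
        (sInf (f '' closedBall x ε) + sSup (f '' closedBall x ε) - 2 * f x) / ε ^ 2
        - ⟪gradient f x, fderiv ℝ (gradient f) x (gradient f x)⟫_ℝ / ‖gradient f x‖ ^ 2)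
      =O[𝓝[>] 0] (fun ε : ℝ => ε ^ 2) := by
  set G := gradient f x
  have hG : 0 < ‖G‖ := norm_pos_iff.2 hgrad
  have hv : ‖‖G‖⁻¹ • G‖ = 1 := norm_smul_inv_norm (𝕜 := ℝ) hgrad
  have hfg (w : E) : fderiv ℝ f x w = ‖G‖ * ⟪‖G‖⁻¹ • G, w⟫_ℝ := by
    rw [real_inner_smul_left, mul_inv_cancel_left₀ hG.ne', inner_gradient_left]
  have hunit : fderiv ℝ (fderiv ℝ f) x (‖G‖⁻¹ • G) (‖G‖⁻¹ • G)
      = ⟪G, fderiv ℝ (gradient f) x G⟫_ℝ / ‖G‖ ^ 2 := by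
    rw [inner_fderiv_gradient]
    simp only [map_smul, smul_apply, smul_eq_mul]
    field_simp
  have hmain := isBigO_sInf_add_sSup_image_closedBall hf hG hv hfg
  rw [hunit] at hmain
  have hpos : ∀ᶠ ε : ℝ in 𝓝[>] 0, 0 < ε := self_mem_nhdsWithin
  refine (hmain.mul (isBigO_refl (fun ε => (ε ^ 2)⁻¹) _)).congr' ?_ ?_ <;>
    filter_upwards [hpos] with ε hε <;> field_simp

end Gradient

/-- Second-order accuracy of the ball min/max approximation of the
(normalized) infinity Laplacian: for `f` four times continuously
differentiable near `x` with nonvanishing gradient,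
`ε⁻²(min_{B̄_ε(x)} f + max_{B̄_ε(x)} f − 2f(x)) = Δ_∞f(x)/|∇f(x)|² + O(ε²)`
as `ε → 0⁺`, where `Δ_∞ f(x) = (∇f)ᵀ (Hess f) (∇f)(x)`. -/
theorem infinity_laplacian_ball_approximation
    (d : ℕ) (f : EuclideanSpace ℝ (Fin d) → ℝ)
    (x : EuclideanSpace ℝ (Fin d))
    (hf : ContDiffAt ℝ 4 f x) (hgrad : gradient f x ≠ 0)
    (Δinf : ℝ)
    (hΔ : Δinf = ⟪gradient f x,
        (fderiv ℝ (fun y => gradient f y) x) (gradient f x)⟫_ℝ) :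
    (fun ε : ℝ =>
        (sInf (f '' closedBall x ε) + sSup (f '' closedBall x ε) - 2 * f x)
          / ε ^ 2
        - Δinf / ‖gradient f x‖ ^ 2)
      =O[nhdsWithin 0 (Set.Ioi 0)] (fun ε : ℝ => ε ^ 2) := by
  rw [hΔ]
  exact infinity_laplacian_ball_approximation_general hf hgrad
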